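/- arXiv:2112.02553 — 8 statements merged into one kernel-verified Lean document; each statement's English description precedes it below -/
import Mathlib

section
/- Let R > 0 be the sweep-circle radius and S = (r_S, φ_S) a site with 0 ≤ r_S < R. For every point P = (r, φ) with r ≥ 0: dH(P, S) = R − r if and only if r = artanh((cosh R − cosh r_S)/(sinh R − sinh r_S · cos(φ − φ_S))). In other words, P lies on the beach ellipse of S exactly when its radial coordinate equals the beach-ellipse radius function f_S evaluated at its angular coordinate. -/
/-- Inverse hyperbolic cosine: `arcosh x = log (x + √(x² − 1))`. -/
noncomputable def arcosh (x : ℝ) : ℝ := Real.log (x + Real.sqrt (x ^ 2 - 1))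

/-- Inverse hyperbolic tangent: `artanh x = (1/2) · log ((1 + x)/(1 − x))`. -/
noncomputable def artanh (x : ℝ) : ℝ := (1 / 2) * Real.log ((1 + x) / (1 - x))

/-- Hyperbolic distance between points given in polar coordinates. -/
noncomputable def dH (r₁ φ₁ r₂ φ₂ : ℝ) : ℝ :=
  arcosh (Real.cosh r₁ * Real.cosh r₂ - Real.sinh r₁ * Real.sinh r₂ * Real.cos (φ₁ - φ₂))

/-- A point `P = (r, φ)` is equidistant from the site `S = (r_S, φ_S)` and the sweep
circle of radius `R` centered at the pole if and only if its radial coordinate equals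
the beach-ellipse radius function of `S` evaluated at `φ`. -/
theorem ellipse_curve (R rS φS : ℝ) (hR : 0 < R) (hrS₀ : 0 ≤ rS) (hrS : rS < R)
    (r φ : ℝ) (hr : 0 ≤ r) :
    dH r φ rS φS = R - r ↔
      r = artanh ((Real.cosh R - Real.cosh rS) /
        (Real.sinh R - Real.sinh rS * Real.cos (φ - φS))) := by
  set c := Real.cos (φ - φS) with hc
  have hc1 : c ≤ 1 := Real.cos_le_one _
  have hsS : 0 ≤ Real.sinh rS := Real.sinh_nonneg_iff.2 hrS₀
  have hsr : 0 ≤ Real.sinh r := Real.sinh_nonneg_iff.2 hr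
  have hN : 0 < Real.cosh R - Real.cosh rS := by
    have := (Real.cosh_lt_cosh (x := rS) (y := R)).2
      (by rwa [abs_of_nonneg hrS₀, abs_of_pos hR])
    linarith
  have hND : Real.cosh R - Real.cosh rS < Real.sinh R - Real.sinh rS * c := by
    have h1 : Real.exp (-R) < Real.exp (-rS) := Real.exp_lt_exp.2 (by linarith)
    rw [← Real.cosh_sub_sinh, ← Real.cosh_sub_sinh] at h1
    nlinarith
  have hD : 0 < Real.sinh R - Real.sinh rS * c := hN.trans hND
  set X := Real.cosh r * Real.cosh rS - Real.sinh r * Real.sinh rS * c with hX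
  have hXge : Real.cosh (r - rS) ≤ X := by
    rw [Real.cosh_sub]
    nlinarith [mul_nonneg hsr hsS]
  have hX1 : 1 ≤ X := (Real.one_le_cosh _).trans hXge
  have hd : dH r φ rS φS = Real.arcosh X := rfl
  have hmem : (Real.cosh R - Real.cosh rS) / (Real.sinh R - Real.sinh rS * c) ∈
      Set.Ioo (-1 : ℝ) 1 :=
    ⟨by have := div_pos hN hD; linarith, (div_lt_one hD).2 hND⟩
  have ha : artanh ((Real.cosh R - Real.cosh rS) / (Real.sinh R - Real.sinh rS * c)) =
      Real.artanh ((Real.cosh R - Real.cosh rS) / (Real.sinh R - Real.sinh rS * c)) :=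
    (Real.artanh_eq_half_log (Set.Ioo_subset_Icc_self hmem)).symm
  rw [hd, ha]
  have key : Real.cosh (R - r) = X ↔
      Real.tanh r = (Real.cosh R - Real.cosh rS) / (Real.sinh R - Real.sinh rS * c) := by
    rw [Real.tanh_eq_sinh_div_cosh, div_eq_div_iff (Real.cosh_pos r).ne' hD.ne',
      Real.cosh_sub, hX]
    constructor <;> intro h <;> linarith
  constructor
  · intro h
    rw [← key.1 (by rw [← h, Real.cosh_arcosh hX1]), Real.artanh_tanh]
  · intro h
    have h2 : Real.cosh (R - r) = X := key.2 (by
      rw [← Real.tanh_artanh hmem, ← h])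
    have h3 : r ≤ R := by
      by_contra hlt
      push Not at hlt
      rw [← h2, Real.cosh_le_cosh, abs_of_pos (by linarith), abs_of_neg (by linarith)] at hXge
      linarith
    rw [← h2, Real.arcosh_cosh (by linarith)]
end

section
/- Let R > 0 be the sweep-circle radius and let S = (r_S, φ_S) and T = (r_T, φ_T) be two distinct sites (i.e. r_S ≠ r_T, or φ_S − φ_T is not a multiple of 2π) with 0 < r_S ≤ r_T < R. Then the point P_i = (f_T(φ_T + π), φ_T + π) on the beach ellipse of T at angle φ_T + π lies strictly inside the beach ellipse of S, i.e. dH(P_i, S) < R − r(P_i); and the point P_o = (f_T(φ_T), φ_T) on the beach ellipse of T at angle φ_T lies strictly outside the beach ellipse of S, i.e. dH(P_o, S) > R − r(P_o). -/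
/-- Beach-ellipse radius function of a site `(r_S, φ_S)` for sweep radius `R`. -/
noncomputable def ellipseFun (R rS φS φ : ℝ) : ℝ :=
  artanh ((Real.cosh R - Real.cosh rS) /
    (Real.sinh R - Real.sinh rS * Real.cos (φ - φS)))

theorem aux_arcosh (x : ℝ) : arcosh x = Real.arcosh x := rfl

theorem aux_artanh_tanh (x : ℝ) : artanh (Real.sinh x / Real.cosh x) = x := by
  rw [← Real.tanh_eq_sinh_div_cosh]
  have h : Real.tanh x ∈ Set.Icc (-1 : ℝ) 1 :=
    ⟨(Real.neg_one_lt_tanh x).le, (Real.tanh_lt_one x).le⟩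
  have h2 := Real.artanh_eq_half_log h
  rw [Real.artanh_tanh] at h2
  unfold artanh
  exact h2.symm

theorem aux_arcosh_lt {x y : ℝ} (hx : 0 < x) (hy : 0 ≤ y) (h : x < Real.cosh y) :
    arcosh x < y := by
  rw [aux_arcosh]
  calc Real.arcosh x < Real.arcosh (Real.cosh y) :=
        (Real.arcosh_lt_arcosh hx (Real.cosh_pos y)).2 h
    _ = y := Real.arcosh_cosh hy

theorem aux_lt_arcosh {x y : ℝ} (hy : 0 ≤ y) (h : Real.cosh y < x) :
    y < arcosh x := by
  rw [aux_arcosh]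
  calc y = Real.arcosh (Real.cosh y) := (Real.arcosh_cosh hy).symm
    _ < Real.arcosh x :=
        (Real.arcosh_lt_arcosh (Real.cosh_pos y) ((Real.cosh_pos y).trans h)).2 h

theorem aux_f_pi (R t φ : ℝ) (ht : 0 < t) (hR : t < R) :
    ellipseFun R t φ (φ + Real.pi) = (R - t) / 2 := by
  unfold ellipseFun
  have e : (Real.cosh R - Real.cosh t) / (Real.sinh R - Real.sinh t * Real.cos (φ + Real.pi - φ))
      = Real.sinh ((R - t) / 2) / Real.cosh ((R - t) / 2) := by
    have hs : 0 < Real.sinh ((R + t) / 2) := Real.sinh_pos_iff.2 (by linarith)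
    have hc := Real.cosh_pos ((R - t) / 2)
    have h1 : R = (R + t) / 2 + (R - t) / 2 := by ring
    have h2 : t = (R + t) / 2 - (R - t) / 2 := by ring
    have e1 : Real.cosh R - Real.cosh t
        = 2 * Real.sinh ((R + t) / 2) * Real.sinh ((R - t) / 2) := by
      generalize (R + t) / 2 = u at *
      generalize (R - t) / 2 = v at *
      subst h1 h2
      rw [Real.cosh_add, Real.cosh_sub]; ring
    have e2 : Real.sinh R + Real.sinh t
        = 2 * Real.sinh ((R + t) / 2) * Real.cosh ((R - t) / 2) := by
      generalize (R + t) / 2 = u at *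
      generalize (R - t) / 2 = v at *
      subst h1 h2
      rw [Real.sinh_add, Real.sinh_sub]; ring
    rw [add_sub_cancel_left, Real.cos_pi, mul_neg_one, sub_neg_eq_add, e1, e2]
    field_simp
  rw [e, aux_artanh_tanh]

theorem aux_f_zero (R t φ : ℝ) (hR : t < R) :
    ellipseFun R t φ φ = (R + t) / 2 := by
  unfold ellipseFun
  have e : (Real.cosh R - Real.cosh t) / (Real.sinh R - Real.sinh t * Real.cos (φ - φ))
      = Real.sinh ((R + t) / 2) / Real.cosh ((R + t) / 2) := by
    have hs : 0 < Real.sinh ((R - t) / 2) := Real.sinh_pos_iff.2 (by linarith)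
    have hc := Real.cosh_pos ((R + t) / 2)
    have h1 : R = (R + t) / 2 + (R - t) / 2 := by ring
    have h2 : t = (R + t) / 2 - (R - t) / 2 := by ring
    have e1 : Real.cosh R - Real.cosh t
        = 2 * Real.sinh ((R + t) / 2) * Real.sinh ((R - t) / 2) := by
      generalize (R + t) / 2 = u at *
      generalize (R - t) / 2 = v at *
      subst h1 h2
      rw [Real.cosh_add, Real.cosh_sub]; ring
    have e2 : Real.sinh R - Real.sinh t
        = 2 * Real.cosh ((R + t) / 2) * Real.sinh ((R - t) / 2) := by
      generalize (R + t) / 2 = u at *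
      generalize (R - t) / 2 = v at *
      subst h1 h2
      rw [Real.sinh_add, Real.sinh_sub]; ring
    rw [sub_self, Real.cos_zero, mul_one, e1, e2]
    field_simp
  rw [e, aux_artanh_tanh]

/-- For two distinct sites `S`, `T` strictly inside the sweep circle with
`0 < r_S ≤ r_T < R`, the point of the beach ellipse of `T` at angle `φ_T + π` is
strictly inside the beach ellipse of `S`, and the point at angle `φ_T` is strictly
outside the beach ellipse of `S`. -/
theorem inside_outside (R rS φS rT φT : ℝ) (hR : 0 < R)
    (hdist : rS ≠ rT ∨ ¬ ∃ k : ℤ, φS - φT = 2 * Real.pi * k)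
    (hrS : 0 < rS) (hST : rS ≤ rT) (hrT : rT < R) :
    dH (ellipseFun R rT φT (φT + Real.pi)) (φT + Real.pi) rS φS
        < R - ellipseFun R rT φT (φT + Real.pi) ∧
      dH (ellipseFun R rT φT φT) φT rS φS > R - ellipseFun R rT φT φT := by
  rw [aux_f_pi R rT φT (hrS.trans_le hST) hrT, aux_f_zero R rT φT hrT]
  have hc1 : Real.cos (φT - φS) ≤ 1 := Real.cos_le_one _
  have hc0 : -1 ≤ Real.cos (φT - φS) := Real.neg_one_le_cos _
  have hss : 0 < Real.sinh rS := Real.sinh_pos_iff.2 hrS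
  have hd : rS < rT ∨ Real.cos (φT - φS) < 1 := by
    rcases hdist with h | h
    · exact Or.inl (lt_of_le_of_ne hST h)
    · refine Or.inr (lt_of_le_of_ne hc1 fun hc => h ?_)
      obtain ⟨k, hk⟩ := (Real.cos_eq_one_iff _).1 hc
      exact ⟨-k, by push_cast; linarith⟩
  have ha : 0 < Real.sinh ((R - rT) / 2) := Real.sinh_pos_iff.2 (by linarith)
  have hb : 0 < Real.sinh ((R + rT) / 2) := Real.sinh_pos_iff.2 (by linarith)
  have hpa := mul_pos ha hss
  have hpb := mul_pos hb hss
  constructor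
  · unfold dH
    have hcos : Real.cos (φT + Real.pi - φS) = - Real.cos (φT - φS) := by
      rw [← Real.cos_add_pi]; congr 1; ring
    rw [hcos]
    refine aux_arcosh_lt ?_ (by linarith) ?_
    · have := Real.cosh_pos ((R - rT) / 2 - rS)
      rw [Real.cosh_sub] at this
      nlinarith
    · have e : Real.cosh (R - (R - rT) / 2) = Real.cosh ((R - rT) / 2 + rT) := by
        congr 1; ring
      rw [e]
      have h1 := Real.cosh_add ((R - rT) / 2) rS
      rcases hd with h | h
      · have : Real.cosh ((R - rT) / 2 + rS) < Real.cosh ((R - rT) / 2 + rT) := by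
          rw [Real.cosh_lt_cosh, abs_of_pos (by linarith), abs_of_pos (by linarith)]
          linarith
        nlinarith
      · have : Real.cosh ((R - rT) / 2 + rS) ≤ Real.cosh ((R - rT) / 2 + rT) := by
          rw [Real.cosh_le_cosh, abs_of_pos (by linarith), abs_of_pos (by linarith)]
          linarith
        nlinarith
  · unfold dH
    refine aux_lt_arcosh (by linarith) ?_
    have e : Real.cosh (R - (R + rT) / 2) = Real.cosh ((R + rT) / 2 - rT) := by
      congr 1; ring
    rw [e]
    have h1 := Real.cosh_sub ((R + rT) / 2) rS
    rcases hd with h | h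
    · have : Real.cosh ((R + rT) / 2 - rT) < Real.cosh ((R + rT) / 2 - rS) := by
        rw [Real.cosh_lt_cosh, abs_of_pos (by linarith), abs_of_pos (by linarith)]
        linarith
      nlinarith
    · have : Real.cosh ((R + rT) / 2 - rT) ≤ Real.cosh ((R + rT) / 2 - rS) := by
        rw [Real.cosh_le_cosh, abs_of_pos (by linarith), abs_of_pos (by linarith)]
        linarith
      nlinarith
end

section
/- Let R > 0 be the sweep-circle radius and let S = (r_S, φ_S) and T = (r_T, φ_T) be two distinct sites (i.e. r_S ≠ r_T, or φ_S − φ_T is not a multiple of 2π) with 0 < r_S ≤ r_T < R. Then the set {φ ∈ [0, 2π) : f_S(φ) = f_T(φ)} has exactly two elements; that is, the two non-degenerate beach ellipses intersect in exactly two points. -/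
lemma aux_artanh_inj {x y : ℝ} (hx : 0 < x) (hx1 : x < 1) (hy : 0 < y) (hy1 : y < 1) :
    artanh x = artanh y ↔ x = y := by
  constructor
  · intro h
    unfold artanh at h
    have h1 : Real.log ((1 + x) / (1 - x)) = Real.log ((1 + y) / (1 - y)) := by linarith
    have hx2 : 0 < 1 - x := by linarith
    have hy2 : 0 < 1 - y := by linarith
    have h2 := Real.log_injOn_pos (Set.mem_Ioi.2 (by positivity)) (Set.mem_Ioi.2 (by positivity)) h1
    rw [div_eq_div_iff hx2.ne' hy2.ne'] at h2
    linarith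
  · rintro rfl; rfl

lemma aux_arg {R r c : ℝ} (hr : 0 < r) (hrR : r < R) (hc : c ≤ 1) :
    0 < Real.cosh R - Real.cosh r ∧ 0 < Real.sinh R - Real.sinh r * c ∧
    0 < (Real.cosh R - Real.cosh r) / (Real.sinh R - Real.sinh r * c) ∧
    (Real.cosh R - Real.cosh r) / (Real.sinh R - Real.sinh r * c) < 1 := by
  have h1 : Real.cosh r < Real.cosh R := by
    rw [Real.cosh_lt_cosh, abs_of_pos hr, abs_of_pos (hr.trans hrR)]; exact hrR
  have h2 : Real.exp (-R) < Real.exp (-r) := Real.exp_lt_exp.2 (by linarith)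
  have h3 := Real.cosh_sub_sinh R
  have h4 := Real.cosh_sub_sinh r
  have h5 : 0 < Real.sinh r := Real.sinh_pos_iff.2 hr
  have h6 : Real.sinh r * c ≤ Real.sinh r := by nlinarith
  have h7 : 0 < Real.cosh R - Real.cosh r := by linarith
  have h8 : 0 < Real.sinh R - Real.sinh r * c := by linarith
  refine ⟨h7, h8, div_pos h7 h8, ?_⟩
  rw [div_lt_one h8]; linarith

lemma aux_ineq {R r t : ℝ} (hr : r < t) (ht : t < R) :
    (Real.cosh R - Real.cosh r) * (Real.sinh R - Real.sinh t) <
    (Real.cosh R - Real.cosh t) * (Real.sinh R - Real.sinh r) := by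
  have e1 : Real.exp R * Real.exp (-R) = 1 := by rw [← Real.exp_add]; simp
  have e2 : Real.exp r * Real.exp (-r) = 1 := by rw [← Real.exp_add]; simp
  have e3 : Real.exp t * Real.exp (-t) = 1 := by rw [← Real.exp_add]; simp
  have l1 : Real.exp r < Real.exp t := Real.exp_lt_exp.2 hr
  have l2 : Real.exp t < Real.exp R := Real.exp_lt_exp.2 ht
  have l3 : Real.exp (-t) < Real.exp (-r) := Real.exp_lt_exp.2 (by linarith)
  have p : 0 < Real.exp (-R) := Real.exp_pos _
  rw [Real.cosh_eq, Real.cosh_eq, Real.cosh_eq, Real.sinh_eq, Real.sinh_eq, Real.sinh_eq]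
  generalize Real.exp R = X at *
  generalize Real.exp r = Y at *
  generalize Real.exp t = Z at *
  generalize Real.exp (-R) = x at *
  generalize Real.exp (-r) = y at *
  generalize Real.exp (-t) = z at *
  have key : 0 < (X - Y) * (X - Z) * (x * (y - z)) :=
    mul_pos (mul_pos (by linarith) (by linarith)) (mul_pos p (by linarith))
  have : (X - Y) * (X - Z) * (x * (y - z)) = 
    2 * (((X + x) / 2 - (Z + z) / 2) * ((X - x) / 2 - (Y - y) / 2) -
     ((X + x) / 2 - (Y + y) / 2) * ((X - x) / 2 - (Z - z) / 2)) := by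
    linear_combination (X * y - X * z - Y * y - Z * y + Y * z + Z * z) * e1 + (-1 + Z * x) * e2 + (1 - Y * x) * e3
  linarith

lemma aux_two (ψ c : ℝ) (h1 : -1 < c) (h2 : c < 1) :
    {φ ∈ Set.Ico 0 (2 * Real.pi) | Real.cos (φ - ψ) = c}.ncard = 2 := by
  have hp : (0:ℝ) < 2 * Real.pi := Real.two_pi_pos
  have a0 : 0 < Real.arccos c := Real.arccos_pos.2 h2
  have a1 : Real.arccos c < Real.pi := by
    rw [← Real.arccos_neg_one]; exact Real.arccos_lt_arccos (le_refl _) h1 h2.le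
  have ac : Real.cos (Real.arccos c) = c := Real.cos_arccos h1.le h2.le
  rw [Set.ncard_eq_two]
  generalize Real.arccos c = α at *
  refine ⟨toIcoMod hp 0 (ψ + α), toIcoMod hp 0 (ψ - α), ?_, ?_⟩
  · intro h
    rw [toIcoMod_eq_toIcoMod] at h
    obtain ⟨n, hn⟩ := h
    rw [zsmul_eq_mul] at hn
    have g1 : (-1:ℝ) < n := by nlinarith
    have g2 : (n:ℝ) < 0 := by nlinarith
    have g1' : -1 < n := by exact_mod_cast g1
    have g2' : n < 0 := by exact_mod_cast g2
    omega
  · ext φ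
    simp only [Set.mem_ofPred_eq, Set.mem_insert_iff, Set.mem_singleton_iff]
    have key : ∀ x, φ = toIcoMod hp 0 x ↔ φ ∈ Set.Ico 0 (2 * Real.pi) ∧ ∃ n : ℤ, x = φ + n * (2 * Real.pi) := by
      intro x
      rw [eq_comm, toIcoMod_eq_iff]
      simp [zsmul_eq_mul]
    rw [key, key, ← and_or_left]
    refine and_congr_right fun _ => ?_
    rw [← ac, Real.cos_eq_cos_iff]
    constructor
    · rintro ⟨k, hk | hk⟩
      · left; refine ⟨k, ?_⟩; linarith
      · right; refine ⟨-k, ?_⟩; push_cast; linarith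
    · rintro (⟨n, hn⟩ | ⟨n, hn⟩)
      · exact ⟨n, Or.inl (by linarith)⟩
      · exact ⟨-n, Or.inr (by push_cast; linarith)⟩

lemma aux_lin (P Q D : ℝ) (hD : 0 ≤ D) (h : D ^ 2 < P ^ 2 + Q ^ 2) :
    {φ ∈ Set.Ico 0 (2 * Real.pi) | D = P * Real.cos φ + Q * Real.sin φ}.ncard = 2 := by
  set z : ℂ := ⟨P, Q⟩ with hz
  have hn : ‖z‖ ^ 2 = P ^ 2 + Q ^ 2 := by
    rw [Complex.sq_norm, Complex.normSq_apply]; simp [hz]; ring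
  have hlt : D < ‖z‖ := by
    apply lt_of_pow_lt_pow_left₀ 2 (norm_nonneg _); rw [hn]; exact h
  have hpos : 0 < ‖z‖ := lt_of_le_of_lt hD hlt
  have hP : ‖z‖ * Real.cos z.arg = P := Complex.norm_mul_cos_arg z
  have hQ : ‖z‖ * Real.sin z.arg = Q := Complex.norm_mul_sin_arg z
  have := aux_two z.arg (D / ‖z‖) (by have : 0 ≤ D / ‖z‖ := by positivity
                                      linarith) ((div_lt_one hpos).2 hlt)
  rw [← this]
  congr 1
  ext φ
  simp only [Set.mem_ofPred_eq]
  refine and_congr_right fun _ => ?_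
  rw [eq_div_iff hpos.ne', Real.cos_sub]
  rw [eq_comm]
  have e : P * Real.cos φ + Q * Real.sin φ = (Real.cos φ * Real.cos z.arg + Real.sin φ * Real.sin z.arg) * ‖z‖ := by
    rw [← hP, ← hQ]
    simp only [hP, hQ]
    linear_combination (-Real.cos φ) * hP - Real.sin φ * hQ
  rw [e]

theorem ellipse_intersections (R rS φS rT φT : ℝ) (hR : 0 < R)
    (hdist : rS ≠ rT ∨ ¬ ∃ k : ℤ, φS - φT = 2 * Real.pi * k)
    (hrS : 0 < rS) (hST : rS ≤ rT) (hrT : rT < R) :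
    {φ ∈ Set.Ico 0 (2 * Real.pi) |
        ellipseFun R rS φS φ = ellipseFun R rT φT φ}.ncard = 2 := by
  have hSR : rS < R := lt_of_le_of_lt hST hrT
  have hT0 : 0 < rT := lt_of_lt_of_le hrS hST
  obtain ⟨ha, -⟩ := aux_arg hrS hSR (le_refl 1)
  obtain ⟨hb, -⟩ := aux_arg hT0 hrT (le_refl 1)
  have hs : 0 < Real.sinh rS := Real.sinh_pos_iff.2 hrS
  have ht : 0 < Real.sinh rT := Real.sinh_pos_iff.2 hT0
  have hRR : 0 < Real.sinh R := Real.sinh_pos_iff.2 hR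
  have hab : Real.cosh rS ≤ Real.cosh rT := by
    rw [Real.cosh_le_cosh, abs_of_pos hrS, abs_of_pos hT0]; exact hST
  rw [← aux_lin
    ((Real.cosh R - Real.cosh rS) * Real.sinh rT * Real.cos φT
      - (Real.cosh R - Real.cosh rT) * Real.sinh rS * Real.cos φS)
    ((Real.cosh R - Real.cosh rS) * Real.sinh rT * Real.sin φT
      - (Real.cosh R - Real.cosh rT) * Real.sinh rS * Real.sin φS)
    ((Real.cosh rT - Real.cosh rS) * Real.sinh R)
    (mul_nonneg (by linarith) hRR.le) ?_]
  · congr 1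
    ext φ
    simp only [Set.mem_ofPred_eq]
    refine and_congr_right fun _ => ?_
    obtain ⟨-, d1, p1, q1⟩ := aux_arg hrS hSR (Real.cos_le_one (φ - φS))
    obtain ⟨-, d2, p2, q2⟩ := aux_arg hT0 hrT (Real.cos_le_one (φ - φT))
    unfold ellipseFun
    rw [aux_artanh_inj p1 q1 p2 q2, div_eq_div_iff d1.ne' d2.ne', Real.cos_sub, Real.cos_sub]
    constructor <;> intro h <;> linarith
  · have hC : ((Real.cosh R - Real.cosh rS) * Real.sinh rT * Real.cos φT
      - (Real.cosh R - Real.cosh rT) * Real.sinh rS * Real.cos φS) ^ 2 +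
      ((Real.cosh R - Real.cosh rS) * Real.sinh rT * Real.sin φT
      - (Real.cosh R - Real.cosh rT) * Real.sinh rS * Real.sin φS) ^ 2 =
      ((Real.cosh R - Real.cosh rS) * Real.sinh rT - (Real.cosh R - Real.cosh rT) * Real.sinh rS) ^ 2
      + 2 * ((Real.cosh R - Real.cosh rS) * Real.sinh rT * ((Real.cosh R - Real.cosh rT) * Real.sinh rS))
        * (1 - Real.cos (φS - φT)) := by
      rw [Real.cos_sub]
      linear_combination ((Real.cosh R - Real.cosh rS) * Real.sinh rT) ^ 2 * Real.sin_sq_add_cos_sq φT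
        + ((Real.cosh R - Real.cosh rT) * Real.sinh rS) ^ 2 * Real.sin_sq_add_cos_sq φS
    rw [hC]
    have hm := mul_pos (mul_pos ha ht) (mul_pos hb hs)
    have hc1 := Real.cos_le_one (φS - φT)
    rcases hST.lt_or_eq with hlt | heq
    · have hi := aux_ineq hlt hrT
      have h1 : (Real.cosh rT - Real.cosh rS) * Real.sinh R <
        (Real.cosh R - Real.cosh rS) * Real.sinh rT - (Real.cosh R - Real.cosh rT) * Real.sinh rS := by
        linarith
      have h0 : 0 ≤ (Real.cosh rT - Real.cosh rS) * Real.sinh R := mul_nonneg (by linarith) hRR.le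
      have h2 := pow_lt_pow_left₀ h1 h0 two_ne_zero
      have h3 : 0 ≤ 2 * ((Real.cosh R - Real.cosh rS) * Real.sinh rT * ((Real.cosh R - Real.cosh rT) * Real.sinh rS))
        * (1 - Real.cos (φS - φT)) := mul_nonneg (by linarith) (by linarith)
      linarith
    · have hk : ¬ ∃ k : ℤ, φS - φT = 2 * Real.pi * k := by
        rcases hdist with h | h
        · exact absurd heq h
        · exact h
      have hne : Real.cos (φS - φT) ≠ 1 := by
        intro h
        obtain ⟨k, hk'⟩ := (Real.cos_eq_one_iff _).1 h
        exact hk ⟨k, by linarith⟩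
      have hlt : Real.cos (φS - φT) < 1 := lt_of_le_of_ne hc1 hne
      have h3 : 0 < 2 * ((Real.cosh R - Real.cosh rS) * Real.sinh rT * ((Real.cosh R - Real.cosh rT) * Real.sinh rS))
        * (1 - Real.cos (φS - φT)) := mul_pos (by linarith) (by linarith)
      have h4 : (Real.cosh rT - Real.cosh rS) * Real.sinh R = 0 := by rw [heq]; ring
      rw [h4]
      have := sq_nonneg ((Real.cosh R - Real.cosh rS) * Real.sinh rT - (Real.cosh R - Real.cosh rT) * Real.sinh rS)
      linarith
end

section
/- Let R > 0, let S = (r_S, φ_S) be a site with 0 ≤ r_S ≤ R, and let φ_T ∈ ℝ be an angle such that (r_S, φ_S) is not the point (R, φ_T) (i.e. r_S ≠ R, or φ_S − φ_T is not a multiple of 2π). Then there exists exactly one r ∈ [0, R] with arcosh(cosh r · cosh r_S − sinh r · sinh r_S · cos(φ_T − φ_S)) = R − r. (Thus the degenerate beach ellipse of a site on the sweep circle, namely the segment from the pole O to (R, φ_T), meets the beach ellipse of S in exactly one point, which is the unique point of the segment equidistant from S and (R, φ_T).) -/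
/-- The degenerate beach ellipse of a site on the sweep circle, namely the segment
from the pole to `(R, φ_T)`, meets the beach ellipse of a site `S = (r_S, φ_S)`
(with `S ≠ (R, φ_T)`) in exactly one point: there is a unique `r ∈ [0, R]` whose
distance to `S` equals its distance `R − r` to the sweep circle. -/
theorem degenerate_intersection (R rS φS φT : ℝ) (hR : 0 < R)
    (hrS₀ : 0 ≤ rS) (hrS : rS ≤ R)
    (hdist : rS ≠ R ∨ ¬ ∃ k : ℤ, φS - φT = 2 * Real.pi * k) :
    ∃! r : ℝ, r ∈ Set.Icc 0 R ∧
      arcosh (Real.cosh r * Real.cosh rS -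
        Real.sinh r * Real.sinh rS * Real.cos (φT - φS)) = R - r := by
  have key : ∀ r ∈ Set.Icc 0 R, (arcosh (Real.cosh r * Real.cosh rS -
        Real.sinh r * Real.sinh rS * Real.cos (φT - φS)) = R - r ↔
      Real.sinh r * (Real.sinh R - Real.sinh rS * Real.cos (φT - φS)) -
        Real.cosh r * (Real.cosh R - Real.cosh rS) = 0) := by
    intro r hr
    have h1 : (1 : ℝ) ≤ Real.cosh r * Real.cosh rS -
        Real.sinh r * Real.sinh rS * Real.cos (φT - φS) := by
      have h2 := Real.one_le_cosh (r - rS)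
      rw [Real.cosh_sub] at h2
      have h3 : 0 ≤ Real.sinh r * Real.sinh rS :=
        mul_nonneg (Real.sinh_nonneg_iff.2 hr.1) (Real.sinh_nonneg_iff.2 hrS₀)
      nlinarith [mul_le_mul_of_nonneg_left (Real.cos_le_one (φT - φS)) h3]
    have hRr : 0 ≤ R - r := sub_nonneg.2 hr.2
    change Real.arcosh _ = _ ↔ _
    have hc := Real.cosh_sub R r
    constructor
    · intro h
      have h4 := Real.cosh_arcosh h1
      rw [h] at h4
      linarith
    · intro h
      rw [← Real.arcosh_cosh hRr]
      congr 1
      linarith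
  have hB : 0 < Real.sinh R - Real.sinh rS * Real.cos (φT - φS) := by
    have hs0 : 0 ≤ Real.sinh rS := Real.sinh_nonneg_iff.2 hrS₀
    have hc1 := Real.cos_le_one (φT - φS)
    rcases hrS.lt_or_eq with hlt | heq
    · have := Real.sinh_lt_sinh.2 hlt
      nlinarith [mul_le_mul_of_nonneg_left hc1 hs0]
    · have hk := hdist.resolve_left (fun h => h heq)
      have hne : Real.cos (φT - φS) ≠ 1 := by
        intro h
        obtain ⟨n, hn⟩ := (Real.cos_eq_one_iff _).1 h
        exact hk ⟨-n, by push_cast; linarith⟩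
      have hlt := lt_of_le_of_ne hc1 hne
      have hsR : 0 < Real.sinh R := Real.sinh_pos_iff.2 hR
      rw [heq]
      nlinarith [mul_lt_mul_of_pos_left hlt hsR]
  have hA : Real.cosh rS ≤ Real.cosh R := by
    rw [Real.cosh_le_cosh, abs_of_nonneg hrS₀, abs_of_pos hR]
    exact hrS
  have hcont : ContinuousOn (fun r : ℝ =>
      Real.sinh r * (Real.sinh R - Real.sinh rS * Real.cos (φT - φS)) -
        Real.cosh r * (Real.cosh R - Real.cosh rS)) (Set.Icc 0 R) :=
    ((Real.continuous_sinh.mul continuous_const).sub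
      (Real.continuous_cosh.mul continuous_const)).continuousOn
  have hmem : (0 : ℝ) ∈ Set.Icc
      (Real.sinh 0 * (Real.sinh R - Real.sinh rS * Real.cos (φT - φS)) -
        Real.cosh 0 * (Real.cosh R - Real.cosh rS))
      (Real.sinh R * (Real.sinh R - Real.sinh rS * Real.cos (φT - φS)) -
        Real.cosh R * (Real.cosh R - Real.cosh rS)) := by
    constructor
    · simp only [Real.sinh_zero, Real.cosh_zero]
      linarith
    · have h2 := Real.one_le_cosh (R - rS)
      rw [Real.cosh_sub] at h2
      have h3 : 0 ≤ Real.sinh R * Real.sinh rS :=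
        mul_nonneg (Real.sinh_nonneg_iff.2 hR.le) (Real.sinh_nonneg_iff.2 hrS₀)
      nlinarith [mul_le_mul_of_nonneg_left (Real.cos_le_one (φT - φS)) h3, Real.cosh_sq R]
  obtain ⟨r, hr, hfr⟩ := intermediate_value_Icc hR.le hcont hmem
  refine ⟨r, ⟨hr, (key r hr).2 hfr⟩, ?_⟩
  rintro s ⟨hs, hes⟩
  have hfs := (key s hs).1 hes
  have hz : Real.sinh (s - r) = 0 := by
    rw [Real.sinh_sub]
    refine (mul_eq_zero.1 ?_).resolve_left hB.ne'
    simp only at hfr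
    linear_combination Real.cosh r * hfs - Real.cosh s * hfr
  linarith [Real.sinh_eq_zero.1 hz]
end

section
/- Let R > 0 be the sweep-circle radius and let S = (r_S, φ_S) and T = (r_T, φ_T) be two distinct sites (i.e. r_S ≠ r_T, or φ_S − φ_T is not a multiple of 2π) with 0 < r_S ≤ r_T < R. Then among the angles φ ∈ [0, 2π) with f_S(φ) = f_T(φ) there is exactly one with sin(φ − φ_T) > 0, exactly one with sin(φ − φ_T) < 0, and none with sin(φ − φ_T) = 0. (Thus for sweep radius strictly larger than r_T, the two intersections of the beach ellipses of S and T lie on opposite sides of the line through the pole O and T.) -/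
open Real in
lemma aux_arg_s6 {R r : ℝ} (hr : 0 < r) (h : r < R) (x : ℝ) :
    0 < cosh R - cosh r ∧ cosh R - cosh r < sinh R - sinh r * cos x := by
  have h1 : cosh r < cosh R := by
    rw [cosh_lt_cosh, abs_of_pos hr, abs_of_pos (hr.trans h)]; exact h
  have h2 : cosh R - sinh R < cosh r - sinh r := by
    rw [cosh_sub_sinh, cosh_sub_sinh]; exact exp_lt_exp.2 (by linarith)
  have h3 : 0 < sinh r := sinh_pos_iff.2 hr
  have h4 := cos_le_one x
  exact ⟨by linarith, by nlinarith⟩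

lemma aux_artanh (x : ℝ) (h0 : 0 < x) (h1 : x < 1) :
    (1 + x) / (1 - x) > 0 := div_pos (by linarith) (by linarith)

lemma aux_artanh_inj_s6 {x y : ℝ} (h0 : 0 < x) (h1 : x < 1) (k0 : 0 < y) (k1 : y < 1) :
    artanh x = artanh y ↔ x = y := by
  constructor
  · intro h
    unfold artanh at h
    have h2 := Real.log_injOn_pos (aux_artanh x h0 h1) (aux_artanh y k0 k1) (by linarith)
    rw [div_eq_div_iff (by linarith) (by linarith)] at h2
    linarith
  · rintro rfl; rfl

open Real in
lemma aux_key {R s t : ℝ} (hst : s ≤ t) (htR : t < R) :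
    (cosh R - cosh s) * (sinh R - sinh t) ≤ (cosh R - cosh t) * (sinh R - sinh s) ∧
    (s < t → (cosh R - cosh s) * (sinh R - sinh t) < (cosh R - cosh t) * (sinh R - sinh s)) := by
  have e1 := sinh_sub t s
  have e2 := sinh_sub R t
  have e3 := sinh_sub R s
  have e4 := sinh_add (t - s) (R - t)
  rw [show t - s + (R - t) = R - s by ring] at e4
  have p1 : 0 ≤ sinh (t - s) := sinh_nonneg_iff.2 (by linarith)
  have p2 : 0 < sinh (R - t) := sinh_pos_iff.2 (by linarith)
  have q1 := one_le_cosh (t - s)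
  have q2 : 1 < cosh (R - t) := one_lt_cosh.2 (by linarith)
  refine ⟨by nlinarith, fun h => ?_⟩
  have p3 : 0 < sinh (t - s) := sinh_pos_iff.2 (by linarith)
  nlinarith

open Real in
lemma aux_unique {A B C x y : ℝ} (h1 : C < A) (h2 : 0 < C + A)
    (hx : C - A * cos x + B * sin x = 0) (hy : C - A * cos y + B * sin y = 0)
    (hs : 0 < sin x * sin y) : ∃ k : ℤ, y - x = k * (2 * π) := by
  obtain ⟨m, d, rfl, rfl⟩ : ∃ m d : ℝ, x = m - d ∧ y = m + d :=
    ⟨(x + y) / 2, (y - x) / 2, by ring, by ring⟩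
  rw [cos_sub, sin_sub] at hx
  rw [cos_add, sin_add] at hy
  rw [sin_sub, sin_add] at hs
  have em := sin_sq_add_cos_sq m
  have ed := sin_sq_add_cos_sq d
  have key : sin d * (A * cos d - C * cos m) = 0 := by
    linear_combination -(sin m * cos d + cos m * sin d) / 2 * hx
      + (sin m * cos d - cos m * sin d) / 2 * hy - A * sin d * cos d * em
  have hd : sin d = 0 := by
    rcases mul_eq_zero.1 key with h | h
    · exact h
    · exfalso
      have h3 : A ^ 2 * cos d ^ 2 = C ^ 2 * cos m ^ 2 := by
        rw [← mul_pow, ← mul_pow, sub_eq_zero.1 h]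
      have h4 : cos m ^ 2 < cos d ^ 2 := by nlinarith
      have h5 : C ^ 2 < A ^ 2 := by nlinarith
      nlinarith [sq_nonneg (cos m), sq_nonneg (cos d)]
  obtain ⟨k, hk⟩ := sin_eq_zero_iff.1 hd
  exact ⟨k, by rw [← mul_comm (2 * π)]; linear_combination -2 * hk⟩

open Real in
lemma aux_exu {A B C p : ℝ} (h1 : C < A) (h2 : 0 < C + A) (P : ℝ → Prop)
    (hP : ∀ u v, P u → P v → 0 < u * v)
    (hex : ∃ x, C - A * cos x + B * sin x = 0 ∧ P (sin x)) :
    ∃! φ : ℝ, φ ∈ Set.Ico 0 (2 * π) ∧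
      C - A * cos (φ - p) + B * sin (φ - p) = 0 ∧ P (sin (φ - p)) := by
  obtain ⟨x, hx, hPx⟩ := hex
  have hm := toIcoMod_mem_Ico two_pi_pos 0 (x + p)
  have e : toIcoMod two_pi_pos 0 (x + p) - p = x - toIcoDiv two_pi_pos 0 (x + p) * (2 * π) := by
    rw [toIcoMod, zsmul_eq_mul]; ring
  refine ⟨toIcoMod two_pi_pos 0 (x + p), ⟨by simpa using hm, ?_, ?_⟩, ?_⟩
  · rw [e, cos_sub_int_mul_two_pi, sin_sub_int_mul_two_pi]; exact hx
  · rw [e, sin_sub_int_mul_two_pi]; exact hPx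
  · rintro y ⟨hy, hy1, hy2⟩
    obtain ⟨k, hk⟩ := aux_unique h1 h2 hx hy1 (hP _ _ hPx hy2)
    symm
    rw [toIcoMod_eq_iff]
    refine ⟨by simpa using hy, -k, ?_⟩
    rw [zsmul_eq_mul]; push_cast; linear_combination -hk

open Real in
lemma aux_pos {A B C : ℝ} (h1 : C < A) (h2 : 0 < C + A) :
    ∃ x, C - A * cos x + B * sin x = 0 ∧ 0 < sin x := by
  have := intermediate_value_Ioo (f := fun x => C - A * cos x + B * sin x) pi_pos.le
    (by fun_prop)
  obtain ⟨x, hx, h⟩ := this (show (0:ℝ) ∈ _ by simp; constructor <;> linarith)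
  exact ⟨x, h, sin_pos_of_mem_Ioo hx⟩

open Real in
lemma aux_neg {A B C : ℝ} (h1 : C < A) (h2 : 0 < C + A) :
    ∃ x, C - A * cos x + B * sin x = 0 ∧ sin x < 0 := by
  obtain ⟨x, hx, hs⟩ := aux_pos (B := -B) h1 h2
  refine ⟨-x, ?_, ?_⟩
  · rw [cos_neg, sin_neg]; linarith
  · rw [sin_neg]; linarith

/-- The two intersections of the beach ellipses of two distinct sites `S`, `T` with
`0 < r_S ≤ r_T < R` lie on opposite sides of the line through the pole and `T`:
among the angles `φ ∈ [0, 2π)` where the radius functions agree, exactly one has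
`sin (φ − φ_T) > 0`, exactly one has `sin (φ − φ_T) < 0`, and none has
`sin (φ − φ_T) = 0`. -/
theorem intersections_opposite_sides (R rS φS rT φT : ℝ) (hR : 0 < R)
    (hdist : rS ≠ rT ∨ ¬ ∃ k : ℤ, φS - φT = 2 * Real.pi * k)
    (hrS : 0 < rS) (hST : rS ≤ rT) (hrT : rT < R) :
    (∃! φ : ℝ, φ ∈ Set.Ico 0 (2 * Real.pi) ∧
        ellipseFun R rS φS φ = ellipseFun R rT φT φ ∧ Real.sin (φ - φT) > 0) ∧
      (∃! φ : ℝ, φ ∈ Set.Ico 0 (2 * Real.pi) ∧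
        ellipseFun R rS φS φ = ellipseFun R rT φT φ ∧ Real.sin (φ - φT) < 0) ∧
      ¬ ∃ φ : ℝ, φ ∈ Set.Ico 0 (2 * Real.pi) ∧
        ellipseFun R rS φS φ = ellipseFun R rT φT φ ∧ Real.sin (φ - φT) = 0 := by
  have hrT0 : 0 < rT := hrS.trans_le hST
  have hrSR : rS < R := hST.trans_lt hrT
  obtain ⟨A, hA⟩ : ∃ A, A = (Real.cosh R - Real.cosh rS) * Real.sinh rT
      - (Real.cosh R - Real.cosh rT) * Real.sinh rS * Real.cos (φS - φT) := ⟨_, rfl⟩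
  obtain ⟨B, hB⟩ : ∃ B, B = (Real.cosh R - Real.cosh rT) * Real.sinh rS * Real.sin (φS - φT) :=
    ⟨_, rfl⟩
  obtain ⟨C, hC⟩ : ∃ C, C = (Real.cosh rT - Real.cosh rS) * Real.sinh R := ⟨_, rfl⟩
  have hiff : ∀ φ, ellipseFun R rS φS φ = ellipseFun R rT φT φ ↔
      C - A * Real.cos (φ - φT) + B * Real.sin (φ - φT) = 0 := by
    intro φ
    obtain ⟨a1, a2⟩ := aux_arg_s6 hrS hrSR (φ - φS)
    obtain ⟨b1, b2⟩ := aux_arg_s6 hrT0 hrT (φ - φT)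
    unfold ellipseFun
    rw [aux_artanh_inj_s6 (div_pos a1 (a1.trans a2)) ((div_lt_one (a1.trans a2)).2 a2)
      (div_pos b1 (b1.trans b2)) ((div_lt_one (b1.trans b2)).2 b2),
      div_eq_div_iff (a1.trans a2).ne' (b1.trans b2).ne',
      show φ - φS = (φ - φT) - (φS - φT) by ring, Real.cos_sub (φ - φT), hA, hB, hC]
    constructor <;> intro h <;> linear_combination h
  have hT := (aux_arg_s6 hrT0 hrT 0).1
  have hS0 : 0 < Real.sinh rS := Real.sinh_pos_iff.2 hrS
  have hc0 : 0 ≤ C := by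
    rw [hC]
    have : Real.cosh rS ≤ Real.cosh rT := by
      rw [Real.cosh_le_cosh, abs_of_pos hrS, abs_of_pos hrT0]; exact hST
    exact mul_nonneg (by linarith) (Real.sinh_pos_iff.2 hR).le
  have h1 : C < A := by
    obtain ⟨k1, k2⟩ := aux_key hST hrT
    have hcos := Real.cos_le_one (φS - φT)
    have hp := mul_pos hT hS0
    rcases hST.lt_or_eq with hlt | heq
    · have := k2 hlt
      rw [hA, hC]; nlinarith
    · have hne : Real.cos (φS - φT) ≠ 1 := by
        intro h
        obtain ⟨k, hk⟩ := (Real.cos_eq_one_iff _).1 h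
        rcases hdist with hd | hd
        · exact hd heq
        · exact hd ⟨k, by rw [← hk]; ring⟩
      have := lt_of_le_of_ne hcos hne
      rw [hA, hC]; nlinarith
  have h2 : 0 < C + A := by linarith
  simp only [hiff]
  refine ⟨aux_exu h1 h2 (fun u => u > 0) (fun u v hu hv => mul_pos hu hv) (aux_pos h1 h2),
    aux_exu h1 h2 (fun u => u < 0) (fun u v hu hv => mul_pos_of_neg_of_neg hu hv)
      (aux_neg h1 h2), ?_⟩
  rintro ⟨φ, -, h, hs⟩
  rw [hs] at h
  rcases Real.sin_eq_zero_iff_cos_eq.1 hs with hc | hc <;> rw [hc] at h <;> linarith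
end

section
/- Let S = (r_S, φ_S) and T = (r_T, φ_T) be two distinct sites (i.e. r_S ≠ r_T, or φ_S − φ_T is not a multiple of 2π) with 0 < r_S ≤ r_T, and let P = (r_P, φ_T) be the unique point with 0 ≤ r_P ≤ r_T and dH(P, S) = r_T − r_P (the intersection of the segment from the pole O to T with the perpendicular bisector of S and T). Let r_T < R₁ < R₂ be two sweep-circle radii, let Q be a point with dH(Q, S) = dH(Q, T) = R₁ − r(Q) and sin(φ(Q) − φ_T) > 0, and let Q' be a point with dH(Q', S) = dH(Q', T) = R₂ − r(Q') and sin(φ(Q') − φ_T) > 0. Then dH(P, Q) < dH(P, Q'). The same conclusion holds when both conditions sin(φ(Q) − φ_T) > 0 and sin(φ(Q') − φ_T) > 0 are replaced by sin(φ(Q) − φ_T) < 0 and sin(φ(Q') − φ_T) < 0. (As the sweep circle expands, each of the two beach-ellipse intersections of S and T moves along the bisector of S and T monotonically away from P.) -/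
lemma arcosh_nonneg' {x : ℝ} (hx : 1 ≤ x) : 0 ≤ arcosh x := by
  unfold arcosh
  apply Real.log_nonneg
  have := Real.sqrt_nonneg (x ^ 2 - 1)
  linarith

lemma cosh_arcosh' {x : ℝ} (hx : 1 ≤ x) : Real.cosh (arcosh x) = x := by
  unfold arcosh
  have h0 := Real.sqrt_nonneg (x ^ 2 - 1)
  have h1 : Real.sqrt (x ^ 2 - 1) ^ 2 = x ^ 2 - 1 := Real.sq_sqrt (by nlinarith)
  have hp : 0 < x + Real.sqrt (x ^ 2 - 1) := by linarith
  rw [Real.cosh_log hp]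
  have h2 : (x + Real.sqrt (x ^ 2 - 1))⁻¹ = x - Real.sqrt (x ^ 2 - 1) := by
    apply inv_eq_of_mul_eq_one_right
    nlinarith
  rw [h2]; ring

lemma dH_arg {r₁ r₂ : ℝ} (θ : ℝ) (h₁ : 0 ≤ r₁) (h₂ : 0 ≤ r₂) :
    1 ≤ Real.cosh r₁ * Real.cosh r₂ - Real.sinh r₁ * Real.sinh r₂ * Real.cos θ := by
  have h := Real.one_le_cosh (r₁ - r₂)
  rw [Real.cosh_sub] at h
  have h3 : 0 ≤ Real.sinh r₁ * Real.sinh r₂ :=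
    mul_nonneg (Real.sinh_nonneg_iff.2 h₁) (Real.sinh_nonneg_iff.2 h₂)
  nlinarith [Real.cos_le_one θ]

lemma dH_nonneg {r₁ r₂ : ℝ} (φ₁ φ₂ : ℝ) (h₁ : 0 ≤ r₁) (h₂ : 0 ≤ r₂) :
    0 ≤ dH r₁ φ₁ r₂ φ₂ := arcosh_nonneg' (dH_arg _ h₁ h₂)

lemma cosh_dH {r₁ r₂ : ℝ} (φ₁ φ₂ : ℝ) (h₁ : 0 ≤ r₁) (h₂ : 0 ≤ r₂) :
    Real.cosh (dH r₁ φ₁ r₂ φ₂) =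
      Real.cosh r₁ * Real.cosh r₂ - Real.sinh r₁ * Real.sinh r₂ * Real.cos (φ₁ - φ₂) :=
  cosh_arcosh' (dH_arg _ h₁ h₂)

/-- Points on one ray of the bisector: `Y` is a nonnegative combination of `P` and `X`. -/
lemma comb {n0 n1 n2 Cp Sp x0 x1 x2 y0 y1 y2 : ℝ}
    (hn : n0 ≠ 0 ∨ n1 ≠ 0) (hP : Cp * n0 = Sp * n1)
    (hX : x0 * n0 = x1 * n1 + x2 * n2) (hY : y0 * n0 = y1 * n1 + y2 * n2)
    (hp : Cp ^ 2 - Sp ^ 2 = 1) (hCp : 1 ≤ Cp)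
    (hx : x0 ^ 2 - x1 ^ 2 - x2 ^ 2 = 1) (hy : y0 ^ 2 - y1 ^ 2 - y2 ^ 2 = 1)
    (hs : 0 < x2 * y2)
    (hc1 : 1 ≤ Cp * y0 - Sp * y1)
    (hc : Cp * y0 - Sp * y1 ≤ Cp * x0 - Sp * x1) :
    ∃ a b : ℝ, 0 ≤ a ∧ 0 ≤ b ∧ a + b ≤ 1 ∧ y0 = a * Cp + b * x0 ∧ y1 = a * Sp + b * x1 ∧
      y2 = b * x2 := by
  have hx2 : x2 ≠ 0 := by rintro rfl; simp at hs
  obtain ⟨b, hb⟩ : ∃ b, b = y2 / x2 := ⟨_, rfl⟩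
  have hy2 : y2 = b * x2 := by rw [hb]; field_simp
  have hxx : 0 < x2 ^ 2 := by positivity
  have hb0 : 0 < b := by
    rw [hy2] at hs
    by_contra h
    nlinarith
  have hu : (y0 - b * x0) * n0 = (y1 - b * x1) * n1 := by
    rw [hy2] at hY; linear_combination hY - b * hX
  have hdet : (y0 - b * x0) * Sp = (y1 - b * x1) * Cp := by
    rcases hn with h | h
    · apply mul_right_cancel₀ h
      linear_combination Sp * hu - (y1 - b * x1) * hP
    · apply mul_right_cancel₀ h
      linear_combination Cp * hu - (y0 - b * x0) * hP
  obtain ⟨a, ha⟩ : ∃ a, a = (y0 - b * x0) / Cp := ⟨_, rfl⟩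
  have hC : Cp ≠ 0 := by linarith
  have hy0 : y0 = a * Cp + b * x0 := by rw [ha]; field_simp; ring
  have hy1 : y1 = a * Sp + b * x1 := by
    apply mul_right_cancel₀ hC
    rw [hy0] at hdet
    linear_combination -hdet
  clear ha hb hu hdet hY
  obtain ⟨c, hcdef⟩ : ∃ c, c = Cp * x0 - Sp * x1 := ⟨_, rfl⟩
  have hc' : Cp * y0 - Sp * y1 = a + b * c := by
    rw [hy0, hy1, hcdef]; linear_combination a * hp
  have hn1 : a ^ 2 + b ^ 2 + 2 * a * b * c = 1 := by
    rw [hy0, hy1, hy2] at hy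
    rw [hcdef]; linear_combination hy - a ^ 2 * hp - b ^ 2 * hx
  rw [hc', ← hcdef] at hc
  rw [hc'] at hc1
  have hcc : 0 < c ^ 2 - 1 := by
    have : c ^ 2 - 1 = x2 ^ 2 + (x0 * Sp - x1 * Cp) ^ 2 := by
      rw [hcdef]; linear_combination (x0^2 - x1^2) * hp + hx
    rw [this]; positivity
  have hb1 : b ≤ 1 := by
    have h1 : b ^ 2 * (c ^ 2 - 1) = (a + b * c) ^ 2 - 1 := by linear_combination -hn1
    have h2 : b ^ 2 * (c ^ 2 - 1) ≤ 1 * (c ^ 2 - 1) := by rw [h1]; nlinarith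
    have h3 := le_of_mul_le_mul_right h2 hcc
    nlinarith
  have ha0 : 0 ≤ a := by
    by_contra h
    push Not at h
    have h1 : 1 - b ^ 2 = a * (a + b * c + b * c) := by linear_combination -hn1
    have h2 : 0 < a + b * c + b * c := by
      have : 0 < b * c := mul_pos hb0 (by linarith)
      linarith
    nlinarith [mul_neg_of_neg_of_pos h h2]
  refine ⟨a, b, ha0, hb0.le, ?_, hy0, hy1, hy2⟩
  have : 0 ≤ a * b * (c - 1) := mul_nonneg (mul_nonneg ha0 hb0.le) (by linarith)
  nlinarith

set_option maxHeartbeats 1000000 in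
/-- As the sweep circle expands, each of the two beach-ellipse intersections of two
distinct sites `S`, `T` (with `0 < r_S ≤ r_T`) moves along the bisector of `S` and
`T` monotonically away from the point `P`, the intersection of the segment from the
pole to `T` with the bisector.  Here `Q` and `Q'` are the intersections on the same
side of the line through the pole and `T`, for sweep radii `R₁ < R₂`. -/
theorem intersections_move (rS φS rT φT : ℝ)
    (hdist : rS ≠ rT ∨ ¬ ∃ k : ℤ, φS - φT = 2 * Real.pi * k)
    (hrS : 0 < rS) (hST : rS ≤ rT)
    (rP : ℝ) (hrP₀ : 0 ≤ rP) (hrP : rP ≤ rT) (hP : dH rP φT rS φS = rT - rP)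
    (R₁ R₂ : ℝ) (hR₁ : rT < R₁) (hR₁₂ : R₁ < R₂)
    (rQ φQ : ℝ) (hrQ : 0 ≤ rQ)
    (hQS : dH rQ φQ rS φS = R₁ - rQ) (hQT : dH rQ φQ rT φT = R₁ - rQ)
    (rQ' φQ' : ℝ) (hrQ' : 0 ≤ rQ')
    (hQ'S : dH rQ' φQ' rS φS = R₂ - rQ') (hQ'T : dH rQ' φQ' rT φT = R₂ - rQ')
    (hside : (Real.sin (φQ - φT) > 0 ∧ Real.sin (φQ' - φT) > 0) ∨
      (Real.sin (φQ - φT) < 0 ∧ Real.sin (φQ' - φT) < 0)) :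
    dH rP φT rQ φQ < dH rP φT rQ' φQ' := by
  by_contra hcon
  have hrT : 0 < rT := by linarith
  have e1 := cosh_dH φT φS hrP₀ hrS.le
  have e2 := cosh_dH φQ φS hrQ hrS.le
  have e3 := cosh_dH φQ φT hrQ hrT.le
  have e4 := cosh_dH φQ' φS hrQ' hrS.le
  have e5 := cosh_dH φQ' φT hrQ' hrT.le
  have e6 := cosh_dH φT φQ hrP₀ hrQ
  have e7 := cosh_dH φT φQ' hrP₀ hrQ'
  have a7 := dH_arg (φT - φQ') hrP₀ hrQ'
  have n3 := dH_nonneg φQ φT hrQ hrT.le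
  have n5 := dH_nonneg φQ' φT hrQ' hrT.le
  have hle : Real.cosh (dH rP φT rQ' φQ') ≤ Real.cosh (dH rP φT rQ φQ) := by
    rw [Real.cosh_le_cosh, abs_of_nonneg (dH_nonneg _ _ hrP₀ hrQ'),
      abs_of_nonneg (dH_nonneg _ _ hrP₀ hrQ)]
    exact not_lt.1 hcon
  rw [e6, e7] at hle
  have s6 : Real.cos (φT - φQ) = Real.cos (φQ - φT) := by rw [← Real.cos_neg]; ring_nf
  have s7 : Real.cos (φT - φQ') = Real.cos (φQ' - φT) := by rw [← Real.cos_neg]; ring_nf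
  have s1 : Real.cos (φT - φS) = Real.cos (φS - φT) := by rw [← Real.cos_neg]; ring_nf
  have s2 : Real.cos (φQ - φS) = Real.cos (φQ - φT) * Real.cos (φS - φT)
      + Real.sin (φQ - φT) * Real.sin (φS - φT) := by
    rw [← Real.cos_sub]; ring_nf
  have s4 : Real.cos (φQ' - φS) = Real.cos (φQ' - φT) * Real.cos (φS - φT)
      + Real.sin (φQ' - φT) * Real.sin (φS - φT) := by
    rw [← Real.cos_sub]; ring_nf
  rw [hP, s1, Real.cosh_sub] at e1
  rw [hQS, s2] at e2
  rw [hQT] at e3 n3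
  rw [hQ'S, s4] at e4
  rw [hQ'T] at e5 n5
  rw [s6, s7] at hle
  rw [s7] at a7
  have hC := Real.cosh_sq
  have hq0 := Real.sinh_nonneg_iff.2 hrQ
  have hq0' := Real.sinh_nonneg_iff.2 hrQ'
  have hp0 := Real.sinh_nonneg_iff.2 hrP₀
  have hR0 : 0 < Real.sinh R₁ := Real.sinh_pos_iff.2 (by linarith)
  have hsq : 0 < Real.sinh rQ := by
    refine lt_of_le_of_ne hq0 fun h => ?_
    have h' : rQ = 0 := Real.sinh_eq_zero.1 h.symm
    subst h'
    simp only [Real.cosh_zero, Real.sinh_zero] at e3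
    have : Real.cosh rT < Real.cosh (R₁ - 0) := by
      rw [Real.cosh_lt_cosh, abs_of_pos hrT, abs_of_nonneg n3]; linarith
    linarith
  have hsq' : 0 < Real.sinh rQ' := by
    refine lt_of_le_of_ne hq0' fun h => ?_
    have h' : rQ' = 0 := Real.sinh_eq_zero.1 h.symm
    subst h'
    simp only [Real.cosh_zero, Real.sinh_zero] at e5
    have : Real.cosh rT < Real.cosh (R₂ - 0) := by
      rw [Real.cosh_lt_cosh, abs_of_pos hrT, abs_of_nonneg n5]; linarith
    linarith
  have hss : 0 < Real.sin (φQ - φT) * Real.sin (φQ' - φT) := by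
    rcases hside with ⟨h, h'⟩ | ⟨h, h'⟩
    · exact mul_pos h h'
    · exact mul_pos_of_neg_of_neg h h'
  obtain ⟨a, b, ha, hb, hab, h0, h1, h2⟩ := comb
    (n0 := Real.cosh rT - Real.cosh rS)
    (n1 := Real.sinh rT - Real.sinh rS * Real.cos (φS - φT))
    (n2 := - (Real.sinh rS * Real.sin (φS - φT)))
    (Cp := Real.cosh rP) (Sp := Real.sinh rP)
    (x0 := Real.cosh rQ) (x1 := Real.sinh rQ * Real.cos (φQ - φT))
    (x2 := Real.sinh rQ * Real.sin (φQ - φT))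
    (y0 := Real.cosh rQ') (y1 := Real.sinh rQ' * Real.cos (φQ' - φT))
    (y2 := Real.sinh rQ' * Real.sin (φQ' - φT))
    (by
      by_contra! hh
      obtain ⟨h0, h1⟩ := hh
      have hr : rS = rT := by
        have := Real.cosh_strictMonoOn.injOn (Set.mem_Ici.2 hrT.le) (Set.mem_Ici.2 hrS.le) (by linarith)
        exact this.symm
      subst hr
      have hs : 0 < Real.sinh rS := Real.sinh_pos_iff.2 hrS
      have hcos : Real.cos (φS - φT) = 1 := by
        apply mul_left_cancel₀ hs.ne'
        linarith
      obtain ⟨k, hk⟩ := (Real.cos_eq_one_iff _).1 hcos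
      rcases hdist with h | h
      · exact h rfl
      · exact h ⟨k, by rw [← hk]; ring⟩)
    (by linear_combination e1) (by linear_combination e2 - e3) (by linear_combination e4 - e5)
    (by linear_combination hC rP) (Real.one_le_cosh _)
    (by linear_combination hC rQ - Real.sinh rQ ^ 2 * Real.sin_sq_add_cos_sq (φQ - φT))
    (by linear_combination hC rQ' - Real.sinh rQ' ^ 2 * Real.sin_sq_add_cos_sq (φQ' - φT))
    (by
      have := mul_pos (mul_pos hsq hsq') hss
      nlinarith)
    (by linarith) (by linarith)
  -- radius of the second point is at most `R₁`
  have hr' : rQ' ≤ R₁ := by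
    have c1 : Real.cosh rP ≤ Real.cosh R₁ := by
      rw [Real.cosh_le_cosh, abs_of_nonneg hrP₀, abs_of_nonneg (by linarith)]; linarith
    have c2 : Real.cosh rQ ≤ Real.cosh R₁ := by
      rw [Real.cosh_le_cosh, abs_of_nonneg hrQ, abs_of_nonneg (by linarith)]; linarith
    have c3 : Real.cosh rQ' ≤ Real.cosh R₁ := by
      have m1 := mul_le_mul_of_nonneg_left c1 ha
      have m2 := mul_le_mul_of_nonneg_left c2 hb
      have m3 := mul_le_mul_of_nonneg_right hab (Real.cosh_pos R₁).le
      linarith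
    rwa [Real.cosh_le_cosh, abs_of_nonneg hrQ', abs_of_nonneg (by linarith)] at c3
  have hnorm : Real.sinh rQ' ≤ a * Real.sinh rP + b * Real.sinh rQ := by
    refine (abs_le_of_sq_le_sq' ?_ (by positivity)).2
    have q : Real.sinh rQ' ^ 2 = (a * Real.sinh rP + b * (Real.sinh rQ * Real.cos (φQ - φT))) ^ 2
        + (b * (Real.sinh rQ * Real.sin (φQ - φT))) ^ 2 := by
      rw [← h1, ← h2]
      linear_combination -Real.sinh rQ' ^ 2 * Real.sin_sq_add_cos_sq (φQ' - φT)
    have q2 : (a * Real.sinh rP + b * Real.sinh rQ) ^ 2 - Real.sinh rQ' ^ 2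
        = 2 * (a * Real.sinh rP * (b * Real.sinh rQ)) * (1 - Real.cos (φQ - φT)) := by
      rw [q]
      linear_combination -(b * Real.sinh rQ) ^ 2 * Real.sin_sq_add_cos_sq (φQ - φT)
    have q3 : 0 ≤ 2 * (a * Real.sinh rP * (b * Real.sinh rQ)) * (1 - Real.cos (φQ - φT)) :=
      mul_nonneg (by positivity) (by linarith [Real.cos_le_one (φQ - φT)])
    linarith
  have kP : Real.sinh R₁ * Real.sinh rP ≤ Real.cosh R₁ * Real.cosh rP
      - (Real.cosh rT * Real.cosh rP - Real.sinh rT * Real.sinh rP) := by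
    have : Real.cosh (rT - rP) ≤ Real.cosh (R₁ - rP) := by
      rw [Real.cosh_le_cosh, abs_of_nonneg (by linarith), abs_of_nonneg (by linarith)]; linarith
    rw [Real.cosh_sub, Real.cosh_sub] at this
    linarith
  have kQ := e3
  rw [Real.cosh_sub] at kQ
  have key : Real.cosh (R₂ - rQ') ≤ Real.cosh (R₁ - rQ') := by
    rw [e5, Real.cosh_sub R₁]
    have t1 := mul_le_mul_of_nonneg_left hnorm hR0.le
    have t2 := mul_le_mul_of_nonneg_left kP ha
    have t3 : Real.cosh rQ' * Real.cosh rT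
        - Real.sinh rQ' * Real.sinh rT * Real.cos (φQ' - φT)
        = Real.cosh rT * (a * Real.cosh rP + b * Real.cosh rQ)
        - Real.sinh rT * (a * Real.sinh rP + b * (Real.sinh rQ * Real.cos (φQ - φT))) := by
      rw [← h0, ← h1]; ring
    rw [t3]
    have t4 : Real.cosh R₁ * Real.cosh rQ'
        = Real.cosh R₁ * (a * Real.cosh rP + b * Real.cosh rQ) := by rw [← h0]
    rw [t4]
    have t5 := congrArg (fun z => b * z) kQ
    linarith
  rw [Real.cosh_le_cosh, abs_of_nonneg n5, abs_of_nonneg (by linarith)] at key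
  linarith
end

section
/- For all real numbers R and r_S with 0 ≤ r_S < R and every angle φ ∈ ℝ: sinh R − sinh r_S · cos φ > 0 and 0 < (cosh R − cosh r_S)/(sinh R − sinh r_S · cos φ) < 1. Consequently, the beach-ellipse radius function f_S(φ) = artanh((cosh R − cosh r_S)/(sinh R − sinh r_S · cos(φ − φ_S))) of a site S = (r_S, φ_S) with 0 ≤ r_S < R is well defined for every φ and satisfies 0 < f_S(φ) < R, i.e. the beach ellipse of S lies strictly between the pole and the sweep circle. -/
/-- The quotient bounds, including the bound by `tanh R`. -/
theorem ellipse_quot_bounds (R rS : ℝ) (hrS₀ : 0 ≤ rS) (hrS : rS < R) (φ : ℝ) :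
    0 < Real.sinh R - Real.sinh rS * Real.cos φ ∧
      0 < (Real.cosh R - Real.cosh rS) / (Real.sinh R - Real.sinh rS * Real.cos φ) ∧
      (Real.cosh R - Real.cosh rS) / (Real.sinh R - Real.sinh rS * Real.cos φ)
        < Real.tanh R := by
  have hs : 0 ≤ Real.sinh rS := Real.sinh_nonneg_iff.2 hrS₀
  have hsR : Real.sinh rS < Real.sinh R := Real.sinh_lt_sinh.2 hrS
  have hc : Real.cosh rS < Real.cosh R := by
    rw [Real.cosh_lt_cosh, abs_of_nonneg hrS₀, abs_of_nonneg (hrS₀.trans hrS.le)]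
    exact hrS
  have hm : Real.sinh rS * Real.cos φ ≤ Real.sinh rS :=
    mul_le_of_le_one_right hs (Real.cos_le_one φ)
  have hD : 0 < Real.sinh R - Real.sinh rS * Real.cos φ := by linarith
  refine ⟨hD, div_pos (by linarith) hD, ?_⟩
  rw [Real.tanh_eq_sinh_div_cosh, div_lt_div_iff₀ hD (Real.cosh_pos R)]
  have h1 : 1 < Real.cosh (R - rS) := Real.one_lt_cosh.2 (by linarith)
  rw [Real.cosh_sub] at h1
  have h2 := Real.cosh_sq R
  have h3 := mul_le_mul_of_nonneg_left hm (hs.trans hsR.le)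
  nlinarith

/-- For `0 ≤ r_S < R` the denominator of the beach-ellipse radius function is
positive and the argument of `artanh` lies strictly between `0` and `1`;
consequently the function is well defined and the beach ellipse lies strictly
between the pole and the sweep circle. -/
theorem ellipseFun_well_defined (R rS : ℝ) (hrS₀ : 0 ≤ rS) (hrS : rS < R) :
    (∀ φ : ℝ, 0 < Real.sinh R - Real.sinh rS * Real.cos φ ∧
        0 < (Real.cosh R - Real.cosh rS) / (Real.sinh R - Real.sinh rS * Real.cos φ) ∧
        (Real.cosh R - Real.cosh rS) / (Real.sinh R - Real.sinh rS * Real.cos φ) < 1) ∧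
      ∀ φS φ : ℝ, 0 < ellipseFun R rS φS φ ∧ ellipseFun R rS φS φ < R := by
  have hlt : Real.tanh R < 1 := Real.tanh_lt_one R
  refine ⟨fun φ => ?_, fun φS φ => ?_⟩
  · obtain ⟨h1, h2, h3⟩ := ellipse_quot_bounds R rS hrS₀ hrS φ
    exact ⟨h1, h2, h3.trans hlt⟩
  · obtain ⟨_, h2, h3⟩ := ellipse_quot_bounds R rS hrS₀ hrS (φ - φS)
    unfold ellipseFun artanh
    rw [← Real.artanh_eq_half_log ⟨by linarith, by linarith⟩]
    refine ⟨Real.artanh_pos ⟨h2, h3.trans hlt⟩, ?_⟩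
    have h4 := Real.artanh_lt_artanh (by linarith) hlt h3
    rwa [Real.artanh_tanh] at h4
end

section
/- Let R > 0 be the sweep-circle radius and S = (r_S, φ_S) a site with 0 ≤ r_S < R. For every point P = (r, φ) with r ≥ 0: dH(P, S) < R − r if and only if r < artanh((cosh R − cosh r_S)/(sinh R − sinh r_S · cos(φ − φ_S))). That is, P lies strictly inside the beach ellipse of S exactly when its radial coordinate is strictly smaller than the beach-ellipse radius function f_S evaluated at its angular coordinate. -/
/-- A point `P = (r, φ)` is strictly closer to the site `S = (r_S, φ_S)` than to the
sweep circle of radius `R` if and only if its radial coordinate is strictly smaller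
than the beach-ellipse radius function of `S` evaluated at `φ`. -/
theorem inside_ellipse_iff (R rS φS : ℝ) (hR : 0 < R) (hrS₀ : 0 ≤ rS) (hrS : rS < R)
    (r φ : ℝ) (hr : 0 ≤ r) :
    dH r φ rS φS < R - r ↔
      r < artanh ((Real.cosh R - Real.cosh rS) /
        (Real.sinh R - Real.sinh rS * Real.cos (φ - φS))) := by
  have hc1 := Real.cos_le_one (φ - φS)
  have hc2 := Real.neg_one_le_cos (φ - φS)
  unfold dH
  generalize Real.cos (φ - φS) = c at *
  have hs0 : 0 ≤ Real.sinh rS := Real.sinh_nonneg_iff.2 hrS₀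
  have hsr : 0 ≤ Real.sinh r := Real.sinh_nonneg_iff.2 hr
  have hss : Real.sinh rS < Real.sinh R := Real.sinh_lt_sinh.2 hrS
  have hcc : Real.cosh rS < Real.cosh R := by
    rw [Real.cosh_lt_cosh, abs_of_nonneg hrS₀, abs_of_pos hR]; exact hrS
  have hsc : Real.sinh rS * c ≤ Real.sinh rS := by nlinarith
  have hD : 0 < Real.sinh R - Real.sinh rS * c := by linarith
  have hexp : Real.cosh R - Real.sinh R < Real.cosh rS - Real.sinh rS := by
    rw [Real.cosh_sub_sinh, Real.cosh_sub_sinh]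
    exact Real.exp_lt_exp.2 (by linarith)
  have hx0 : 0 < (Real.cosh R - Real.cosh rS) / (Real.sinh R - Real.sinh rS * c) :=
    div_pos (by linarith) hD
  have hx1 : (Real.cosh R - Real.cosh rS) / (Real.sinh R - Real.sinh rS * c) < 1 := by
    rw [div_lt_one hD]; linarith
  have hX : Real.cosh (r - rS) ≤
      Real.cosh r * Real.cosh rS - Real.sinh r * Real.sinh rS * c := by
    rw [Real.cosh_sub]
    nlinarith [mul_le_mul_of_nonneg_left hsc hsr]
  have hX1 := (Real.one_le_cosh (r - rS)).trans hX
  have e1 : r < artanh ((Real.cosh R - Real.cosh rS) / (Real.sinh R - Real.sinh rS * c)) ↔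
      Real.cosh r * Real.cosh rS - Real.sinh r * Real.sinh rS * c < Real.cosh (R - r) := by
    have h1 : artanh ((Real.cosh R - Real.cosh rS) / (Real.sinh R - Real.sinh rS * c)) =
        Real.artanh ((Real.cosh R - Real.cosh rS) / (Real.sinh R - Real.sinh rS * c)) :=
      (Real.artanh_eq_half_log ⟨by linarith, hx1.le⟩).symm
    rw [h1]
    conv_lhs => rw [← Real.artanh_tanh r]
    rw [Real.artanh_lt_artanh_iff (Real.tanh_bijOn.mapsTo (Set.mem_univ r)) ⟨by linarith, hx1⟩,
      Real.tanh_eq_sinh_div_cosh, div_lt_div_iff₀ (Real.cosh_pos r) hD, Real.cosh_sub]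
    constructor <;> intro h <;> nlinarith
  rw [e1]
  change Real.arcosh _ < _ ↔ _
  rcases le_or_gt r R with h | h
  · have h2 := Real.arcosh_lt_arcosh (lt_of_lt_of_le one_pos hX1) (Real.cosh_pos (R - r))
    rw [Real.arcosh_cosh (by linarith)] at h2
    exact h2
  · have h3 := Real.arcosh_nonneg hX1
    have h4 : Real.cosh (R - r) ≤ Real.cosh (r - rS) := by
      rw [Real.cosh_le_cosh, abs_of_neg (by linarith), abs_of_pos (by linarith)]
      linarith
    constructor <;> intro h5 <;> linarith
end
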